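/- arXiv:1908.05283 — 2 statements merged into one kernel-verified Lean document; each statement's English description precedes it below -/
import Mathlib

section
/- Let ψ : Ω → ℝ be a nonzero eigenvector of H with eigenvalue E. Then for every α ∈ Ω, |ψ(α)| ≤ (E + K)·u(α)·max_{β∈Ω} |ψ(β)|. (Theorem 1: the landscape function uniformly bounds every many-body eigenstate.) -/
open Matrix Finset

/-!
At a negative minimum of `v`, a matrix `A` with nonpositive off-diagonal entries and positive row
sums gives `A *ᵥ v` a negative entry. This minimum principle makes `A` invertible, and its
eigenvalues positive, since shifting `A` by a nonnegative multiple of the identity preserves the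
assumptions. For `A = H + K • 1`, an eigenvector `ψ` with `|ψ| ≤ M` satisfies
`|A *ᵥ ψ| = (E + K) • |ψ| ≤ (E + K) * M = A *ᵥ (((E + K) * M) • u)`, and the minimum principle
removes `A` from both sides.
-/

theorem sum_add_smul_one_apply {n R : Type*} [Fintype n] [DecidableEq n] [Semiring R]
    (A : Matrix n n R) (c : R) (i : n) :
    ∑ j, (A + c • (1 : Matrix n n R)) i j = ∑ j, A i j + c := by
  simp [sum_add_distrib, one_apply]

/-- A Z-matrix (no positive off-diagonal entry) with positive row sums, that is, strictly
diagonally dominant by rows with a positive diagonal. These are the nonsingular M-matrices that send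
the constant vector `1` to a positive vector, which is what the minimum principle needs. -/
structure IsDominantZMatrix {n R : Type*} [Fintype n] [AddCommMonoid R] [PartialOrder R]
    (A : Matrix n n R) : Prop where
  offDiag_nonpos : ∀ ⦃i j⦄, i ≠ j → A i j ≤ 0
  rowSum_pos : ∀ i, 0 < ∑ j, A i j

namespace IsDominantZMatrix

section OrderedRing

variable {n R : Type*} [Fintype n] [Ring R] [LinearOrder R] [IsStrictOrderedRing R]
  {A : Matrix n n R}

theorem mulVec_apply_neg_of_forall_le (hA : IsDominantZMatrix A) {v : n → R} {i : n}
    (hmin : ∀ j, v i ≤ v j) (hneg : v i < 0) : (A *ᵥ v) i < 0 := by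
  have hterm (j : n) : A i j * v j ≤ A i j * v i := by
    rcases eq_or_ne i j with rfl | hij
    · rfl
    · exact mul_le_mul_of_nonpos_left (hmin j) (hA.offDiag_nonpos hij)
  calc (A *ᵥ v) i = ∑ j, A i j * v j := rfl
    _ ≤ ∑ j, A i j * v i := sum_le_sum fun j _ => hterm j
    _ = (∑ j, A i j) * v i := (sum_mul ..).symm
    _ < 0 := mul_neg_of_pos_of_neg (hA.rowSum_pos i) hneg

theorem nonneg_of_mulVec_nonneg (hA : IsDominantZMatrix A) {v : n → R} (hv : 0 ≤ A *ᵥ v) :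
    0 ≤ v := by
  intro i
  have : Nonempty n := ⟨i⟩
  obtain ⟨k, hk⟩ := Finite.exists_min v
  have hvk : 0 ≤ v k :=
    not_lt.mp fun hneg => (hA.mulVec_apply_neg_of_forall_le hk hneg).not_ge (hv k)
  exact hvk.trans (hk i)

theorem le_of_mulVec_le (hA : IsDominantZMatrix A) {v w : n → R} (h : A *ᵥ v ≤ A *ᵥ w) :
    v ≤ w :=
  sub_nonneg.mp <| hA.nonneg_of_mulVec_nonneg <| by rwa [mulVec_sub, sub_nonneg]

theorem abs_le_of_abs_mulVec_le (hA : IsDominantZMatrix A) {v w : n → R}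
    (h : |A *ᵥ v| ≤ A *ᵥ w) : |v| ≤ w :=
  abs_le'.mpr ⟨hA.le_of_mulVec_le ((le_abs_self _).trans h),
    hA.le_of_mulVec_le <| by simpa only [mulVec_neg] using (neg_le_abs _).trans h⟩

theorem mulVec_injective (hA : IsDominantZMatrix A) : Function.Injective A.mulVec :=
  fun _ _ h => le_antisymm (hA.le_of_mulVec_le h.le) (hA.le_of_mulVec_le h.ge)

theorem add_smul_one [DecidableEq n] (hA : IsDominantZMatrix A) {c : R} (hc : 0 ≤ c) :
    IsDominantZMatrix (A + c • (1 : Matrix n n R)) where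
  offDiag_nonpos i j hij := by simpa [one_apply_ne hij] using hA.offDiag_nonpos hij
  rowSum_pos i := by
    rw [sum_add_smul_one_apply]
    exact add_pos_of_pos_of_nonneg (hA.rowSum_pos i) hc

theorem eigenvalue_pos (hA : IsDominantZMatrix A) {c : R} {v : n → R} (hv : v ≠ 0)
    (hAv : A *ᵥ v = c • v) : 0 < c := by
  classical
  by_contra! hc
  have hker : (A + (-c) • (1 : Matrix n n R)) *ᵥ v = 0 := by
    rw [add_mulVec, smul_mulVec, one_mulVec, hAv, neg_smul, add_neg_cancel]
  have hshift := hA.add_smul_one (neg_nonneg.mpr hc)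
  exact hv (hshift.mulVec_injective (hker.trans (mulVec_zero _).symm))

end OrderedRing

section OrderedField

variable {n R : Type*} [Fintype n] [DecidableEq n] [Field R] [LinearOrder R]
  [IsStrictOrderedRing R] {A : Matrix n n R}

theorem isUnit_det (hA : IsDominantZMatrix A) : IsUnit A.det :=
  (isUnit_iff_isUnit_det A).mp (mulVec_injective_iff_isUnit.mp hA.mulVec_injective)

theorem mulVec_inv_mulVec (hA : IsDominantZMatrix A) (v : n → R) : A *ᵥ (A⁻¹ *ᵥ v) = v := by
  rw [mulVec_mulVec, mul_nonsing_inv A hA.isUnit_det, one_mulVec]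

theorem abs_eigenvector_le (hA : IsDominantZMatrix A) {c M : R} {v : n → R} (hv : v ≠ 0)
    (hAv : A *ᵥ v = c • v) (hM : ∀ i, |v i| ≤ M) : |v| ≤ (c * M) • (A⁻¹ *ᵥ 1) := by
  have hc : 0 < c := hA.eigenvalue_pos hv hAv
  refine hA.abs_le_of_abs_mulVec_le fun i => ?_
  calc |A *ᵥ v| i = c * |v i| := by simp [hAv, abs_mul, abs_of_pos hc]
    _ ≤ c * M := mul_le_mul_of_nonneg_left (hM i) hc.le
    _ = (A *ᵥ ((c * M) • (A⁻¹ *ᵥ 1))) i := by simp [mulVec_smul, hA.mulVec_inv_mulVec]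

end OrderedField

end IsDominantZMatrix

/-- The Hamiltonian with potential `V` and hopping amplitude `t` along the edges of `G`, written
through the adjacency matrix so that its row sums come from the degrees. -/
def hoppingHamiltonian {Ω R : Type*} [DecidableEq Ω] [Ring R] (G : SimpleGraph Ω)
    [DecidableRel G.Adj] (t : R) (V : Ω → R) : Matrix Ω Ω R :=
  diagonal V - t • G.adjMatrix R

section HoppingHamiltonian

variable {Ω R : Type*} [DecidableEq Ω] [Ring R] (G : SimpleGraph Ω) [DecidableRel G.Adj]

theorem hoppingHamiltonian_apply (t : R) (V : Ω → R) (α β : Ω) :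
    hoppingHamiltonian G t V α β = if α = β then V α else if G.Adj α β then -t else 0 := by
  rcases eq_or_ne α β with rfl | hαβ
  · simp [hoppingHamiltonian]
  · by_cases hadj : G.Adj α β <;> simp [hoppingHamiltonian, hαβ, hadj]

theorem sum_hoppingHamiltonian_apply [Fintype Ω] (t : R) (V : Ω → R) (α : Ω) :
    ∑ β, hoppingHamiltonian G t V α β = V α - t * G.degree α := by
  have hdegree : ∑ β, G.adjMatrix R α β = G.degree α := by
    simp [← G.card_neighborFinset_eq_degree, G.neighborFinset_eq_filter]
  simp only [hoppingHamiltonian, Matrix.sub_apply, Matrix.smul_apply, smul_eq_mul,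
    sum_sub_distrib, ← mul_sum, hdegree, diagonal_apply, sum_ite_eq, mem_univ, if_true]

theorem isDominantZMatrix_hoppingHamiltonian_add_smul_one [Fintype Ω] [LinearOrder R]
    [IsStrictOrderedRing R] {t K : R} {V : Ω → R} (ht : 0 ≤ t)
    (hK : ∀ α, t * G.degree α < K + V α) :
    IsDominantZMatrix (hoppingHamiltonian G t V + K • (1 : Matrix Ω Ω R)) where
  offDiag_nonpos α β hαβ := by
    by_cases hadj : G.Adj α β <;> simp [hoppingHamiltonian_apply, hαβ, hadj, ht]
  rowSum_pos α := by
    rw [sum_add_smul_one_apply, sum_hoppingHamiltonian_apply, sub_add_eq_add_sub, add_comm (V α)]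
    exact sub_pos.mpr (hK α)

end HoppingHamiltonian

theorem mbll_landscape_bound_general {Ω R : Type*} [Fintype Ω] [DecidableEq Ω] [Nonempty Ω]
    [Field R] [LinearOrder R] [IsStrictOrderedRing R] {H : Matrix Ω Ω R} {K : R}
    (hHK : IsDominantZMatrix (H + K • (1 : Matrix Ω Ω R)))
    {ψ : Ω → R} (hψ0 : ψ ≠ 0) {E : R} (hψ : H *ᵥ ψ = E • ψ) (α : Ω) :
    |ψ α| ≤ (E + K) * ((H + K • (1 : Matrix Ω Ω R))⁻¹ *ᵥ 1) α *
      univ.sup' univ_nonempty fun β => |ψ β| := by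
  have heigen : (H + K • (1 : Matrix Ω Ω R)) *ᵥ ψ = (E + K) • ψ := by
    rw [add_mulVec, smul_mulVec, one_mulVec, hψ, add_smul]
  have hmax (β : Ω) : |ψ β| ≤ univ.sup' univ_nonempty fun β => |ψ β| :=
    le_sup' (fun β => |ψ β|) (mem_univ β)
  rw [mul_right_comm]
  exact hHK.abs_eigenvector_le hψ0 heigen hmax α

/-- **Theorem 1**: the many-body localization landscape `u = (H + K·I)⁻¹ 𝟙` uniformly
bounds every many-body eigenstate: `|ψ α| ≤ (E + K) · u α · max_β |ψ β|`. -/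
theorem mbll_landscape_bound
    {Ω : Type*} [Fintype Ω] [DecidableEq Ω] [Nonempty Ω]
    (G : SimpleGraph Ω) [DecidableRel G.Adj] (hG : G.Connected)
    (t : ℝ) (ht : 0 < t) (V : Ω → ℝ) (K : ℝ)
    (H : Matrix Ω Ω ℝ)
    (hH : ∀ α β, H α β = if α = β then V α else if G.Adj α β then -t else 0)
    (hK : ∀ α, 0 ≤ K + V α - t * (G.degree α + 1))
    (u : Ω → ℝ) (hu : u = (H + K • (1 : Matrix Ω Ω ℝ))⁻¹ *ᵥ (fun _ => 1))
    (hupos : ∀ α, 0 < u α)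
    (ψ : Ω → ℝ) (hψ0 : ψ ≠ 0) (E : ℝ) (hψ : H *ᵥ ψ = E • ψ) :
    ∀ α, |ψ α| ≤ (E + K) * u α * (Finset.univ.sup' Finset.univ_nonempty fun β => |ψ β|) := by
  obtain rfl : H = hoppingHamiltonian G t V := by ext; rw [hH, hoppingHamiltonian_apply]
  subst hu
  exact mbll_landscape_bound_general (isDominantZMatrix_hoppingHamiltonian_add_smul_one G ht.le
    fun α => by linarith [hK α]) hψ0 hψ
end

section
/- Let W ⊆ Ω be nonempty, let H_W denote the principal submatrix of H on W (i.e., the Hamiltonian of the subgraph of G induced by W, with zero Dirichlet conditions outside W), and note that K + V(α) − t·(deg_W(α)+1) ≥ 0 for all α ∈ W, where deg_W is the degree in the induced subgraph. Then H_W + K·I_W is invertible, its landscape u^{(W)} := (H_W + K·I_W)⁻¹𝟙_W is entrywise strictly positive, and u^{(W)}(α) ≤ u(α) for every α ∈ W. Consequently, for any real numbers E'_W ≤ E', one has 1/u(α) − E' ≤ 1/u^{(W)}(α) − E'_W for every α ∈ W. (Core of Lemma IV.4: restricting the problem to a well can only deepen the effective potential, so the global Agmon action lower-bounds decay of well eigenstates.)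 -/
open Matrix Finset

/-!
The shifted Hamiltonian `H + K` has nonpositive off-diagonal entries, and the lower bound on `K`
says that it maps the constant vector `1` to a positive vector; it is thus a nonsingular M-matrix.
For such a matrix `A`, with `A w > 0` and `w > 0`, the minimum principle holds: if `A v ≥ 0` and `v`
were negative somewhere, then `c = min v / w` is negative and `v - c w` is a nonnegative vector
vanishing at some `i`, so that `(A (v - c w)) i ≤ 0` by the sign of the off-diagonal entries,
whereas `A v - c A w > 0`.

Discarding the coordinates outside a well drops only nonpositive terms when `A` is applied to a
nonnegative vector. Hence the principal submatrix `A_W` is again a nonsingular M-matrix, and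
`A_W (u|_W) ≥ (A u)|_W = 1 = A_W u_W`, whence `u|_W ≥ u_W` by the minimum principle on `W`.
-/

section MMatrix

variable {ι κ R : Type*}

/-- A Z-matrix: a square matrix whose off-diagonal entries are nonpositive. -/
def IsZMatrix [Zero R] [LE R] (A : Matrix ι ι R) : Prop :=
  ∀ ⦃i j⦄, i ≠ j → A i j ≤ 0

/-- A nonsingular M-matrix, encoded through semipositivity: a Z-matrix mapping some positive vector
to a positive vector. This form passes to principal submatrices by restricting the vector, and
invertibility is a consequence (`IsNonsingularMMatrix.isUnit`). -/
structure IsNonsingularMMatrix [Fintype ι] [Ring R] [PartialOrder R] (A : Matrix ι ι R) : Prop where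
  isZMatrix : IsZMatrix A
  exists_pos : ∃ w : ι → R, (∀ i, 0 < w i) ∧ ∀ i, 0 < (A *ᵥ w) i

variable [Fintype ι] [Fintype κ]

namespace IsZMatrix

variable [Ring R] [PartialOrder R] [IsOrderedRing R] {A : Matrix ι ι R}

lemma mulVec_apply_nonpos (hA : IsZMatrix A) {v : ι → R} (hv : 0 ≤ v) {i : ι} (hi : v i = 0) :
    (A *ᵥ v) i ≤ 0 := by
  refine sum_nonpos fun j _ => ?_
  obtain rfl | hij := eq_or_ne i j
  · rw [hi, mul_zero]
  · exact mul_nonpos_of_nonpos_of_nonneg (hA hij) (hv j)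

lemma mulVec_apply_le_submatrix_mulVec (hA : IsZMatrix A) {f : κ → ι} (hf : f.Injective)
    {v : ι → R} (hv : 0 ≤ v) (k : κ) :
    (A *ᵥ v) (f k) ≤ (A.submatrix f f *ᵥ (v ∘ f)) k := by
  have outside_nonpos : ∀ j ∉ univ.map ⟨f, hf⟩, A (f k) j * v j ≤ 0 := by
    refine fun j hj => mul_nonpos_of_nonpos_of_nonneg (hA ?_) (hv j)
    rintro rfl
    exact hj (mem_map_of_mem ⟨f, hf⟩ (mem_univ k))
  calc (A *ᵥ v) (f k)
      ≤ ∑ j ∈ univ.map ⟨f, hf⟩, A (f k) j * v j :=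
        sum_le_sum_of_subset_of_nonpos' (subset_univ _) fun j _ => outside_nonpos j
    _ = (A.submatrix f f *ᵥ (v ∘ f)) k := sum_map _ _ _

end IsZMatrix

protected lemma IsNonsingularMMatrix.submatrix [Ring R] [PartialOrder R] [IsOrderedRing R]
    {A : Matrix ι ι R} (hA : IsNonsingularMMatrix A) {f : κ → ι} (hf : f.Injective) :
    IsNonsingularMMatrix (A.submatrix f f) := by
  obtain ⟨w, hw, hAw⟩ := hA.exists_pos
  refine ⟨fun i j hij => hA.isZMatrix (hf.ne hij), w ∘ f, fun k => hw (f k), fun k => ?_⟩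
  exact (hAw (f k)).trans_le
    (hA.isZMatrix.mulVec_apply_le_submatrix_mulVec hf (fun i => (hw i).le) k)

variable [Field R] [LinearOrder R] [IsStrictOrderedRing R]

namespace IsNonsingularMMatrix

variable {A : Matrix ι ι R}

lemma nonneg_of_mulVec_nonneg (hA : IsNonsingularMMatrix A) {v : ι → R} (hv : 0 ≤ A *ᵥ v) :
    0 ≤ v := by
  obtain ⟨w, hw, hAw⟩ := hA.exists_pos
  by_contra hneg
  obtain ⟨k, hk⟩ : ∃ k, v k < 0 := by simpa [Pi.le_def] using hneg
  have : Nonempty ι := ⟨k⟩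
  obtain ⟨i, hi⟩ := Finite.exists_min fun j => v j / w j
  set c := v i / w i
  have hc : c < 0 := (hi k).trans_lt (div_neg_of_neg_of_pos hk (hw k))
  have gap_nonneg : 0 ≤ v - c • w := fun j => sub_nonneg.2 ((le_div_iff₀ (hw j)).1 (hi j))
  have gap_apply_eq_zero : (v - c • w) i = 0 :=
    sub_eq_zero.2 (div_mul_cancel₀ (v i) (hw i).ne').symm
  have mulVec_gap_nonpos := hA.isZMatrix.mulVec_apply_nonpos gap_nonneg gap_apply_eq_zero
  rw [mulVec_sub, mulVec_smul, Pi.sub_apply, Pi.smul_apply, smul_eq_mul] at mulVec_gap_nonpos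
  have mulVec_apply_nonneg : 0 ≤ (A *ᵥ v) i := hv i
  linarith [mul_neg_of_neg_of_pos hc (hAw i)]

lemma le_of_mulVec_le (hA : IsNonsingularMMatrix A) {v w : ι → R} (h : A *ᵥ v ≤ A *ᵥ w) :
    v ≤ w := by
  rw [← sub_nonneg] at h ⊢
  exact hA.nonneg_of_mulVec_nonneg (by rwa [mulVec_sub])

lemma pos_of_mulVec_pos (hA : IsNonsingularMMatrix A) {v : ι → R} (hv : ∀ i, 0 < (A *ᵥ v) i)
    (i : ι) : 0 < v i := by
  have hv_nonneg : 0 ≤ v := hA.nonneg_of_mulVec_nonneg fun j => (hv j).le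
  refine (hv_nonneg i).lt_of_ne' fun hi => ?_
  exact (hv i).not_ge (hA.isZMatrix.mulVec_apply_nonpos hv_nonneg hi)

variable [DecidableEq ι] [DecidableEq κ]

protected lemma isUnit (hA : IsNonsingularMMatrix A) : IsUnit A :=
  mulVec_injective_iff_isUnit.1 fun _ _ h =>
    (hA.le_of_mulVec_le h.le).antisymm (hA.le_of_mulVec_le h.ge)

lemma mulVec_inv_mulVec (hA : IsNonsingularMMatrix A) (b : ι → R) : A *ᵥ (A⁻¹ *ᵥ b) = b := by
  rw [mulVec_mulVec, mul_nonsing_inv A ((isUnit_iff_isUnit_det A).1 hA.isUnit), one_mulVec]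

lemma inv_mulVec_pos (hA : IsNonsingularMMatrix A) {b : ι → R} (hb : ∀ i, 0 < b i) (i : ι) :
    0 < (A⁻¹ *ᵥ b) i :=
  hA.pos_of_mulVec_pos (by rwa [hA.mulVec_inv_mulVec]) i

lemma submatrix_inv_mulVec_le (hA : IsNonsingularMMatrix A) {f : κ → ι} (hf : f.Injective)
    {b : ι → R} (hb : 0 ≤ b) : (A.submatrix f f)⁻¹ *ᵥ (b ∘ f) ≤ (A⁻¹ *ᵥ b) ∘ f := by
  have inv_mulVec_nonneg : 0 ≤ A⁻¹ *ᵥ b :=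
    hA.nonneg_of_mulVec_nonneg (by rwa [hA.mulVec_inv_mulVec])
  refine (hA.submatrix hf).le_of_mulVec_le fun k => ?_
  calc (A.submatrix f f *ᵥ ((A.submatrix f f)⁻¹ *ᵥ (b ∘ f))) k
      = (A *ᵥ (A⁻¹ *ᵥ b)) (f k) := by
        rw [(hA.submatrix hf).mulVec_inv_mulVec, hA.mulVec_inv_mulVec, Function.comp_apply]
    _ ≤ (A.submatrix f f *ᵥ ((A⁻¹ *ᵥ b) ∘ f)) k :=
        hA.isZMatrix.mulVec_apply_le_submatrix_mulVec hf inv_mulVec_nonneg k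

end IsNonsingularMMatrix

lemma isNonsingularMMatrix_diagonal_sub_smul_adjMatrix [DecidableEq ι] (G : SimpleGraph ι)
    [DecidableRel G.Adj] {t : R} (ht : 0 ≤ t) {d : ι → R}
    (hd : ∀ i, t * G.degree i < d i) :
    IsNonsingularMMatrix (diagonal d - t • G.adjMatrix R) where
  isZMatrix i j hij := by
    rw [Matrix.sub_apply, diagonal_apply_ne d hij, Matrix.smul_apply, SimpleGraph.adjMatrix_apply,
      smul_eq_mul]
    split_ifs <;> simp [ht]
  exists_pos := by
    refine ⟨Function.const ι 1, fun _ => one_pos, fun i => ?_⟩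
    rw [sub_mulVec, smul_mulVec, Pi.sub_apply, Pi.smul_apply, mulVec_diagonal,
      SimpleGraph.adjMatrix_mulVec_const_apply, Function.const_apply, mul_one, mul_one,
      smul_eq_mul, sub_pos]
    exact hd i

end MMatrix

lemma card_filter_adj_le_degree {ι : Type*} [Fintype ι] (G : SimpleGraph ι) [DecidableRel G.Adj]
    (W : Finset ι) (i : ι) : #{j ∈ W | G.Adj i j} ≤ G.degree i := by
  rw [← G.card_neighborFinset_eq_degree, G.neighborFinset_eq_filter]
  exact card_le_card (filter_subset_filter _ (subset_univ W))

theorem mbll_well_landscape_comparison_general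
    {Ω R : Type*} [Fintype Ω] [DecidableEq Ω] [Field R] [LinearOrder R] [IsStrictOrderedRing R]
    (G : SimpleGraph Ω) [DecidableRel G.Adj]
    (t : R) (ht : 0 < t) (V : Ω → R) (K : R)
    (H : Matrix Ω Ω R)
    (hH : ∀ α β, H α β = if α = β then V α else if G.Adj α β then -t else 0)
    (hK : ∀ α, 0 ≤ K + V α - t * (G.degree α + 1))
    (u : Ω → R) (hu : u = (H + K • (1 : Matrix Ω Ω R))⁻¹ *ᵥ (fun _ => 1))
    (W : Finset Ω)
    (HW : Matrix W W R) (hHW : HW = H.submatrix Subtype.val Subtype.val)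
    (uW : W → R) (huW : uW = (HW + K • (1 : Matrix W W R))⁻¹ *ᵥ (fun _ => 1)) :
    (∀ a ∈ W, 0 ≤ K + V a - t * ((W.filter fun b => G.Adj a b).card + 1)) ∧
    IsUnit (HW + K • (1 : Matrix W W R)) ∧
    (∀ a : W, 0 < uW a) ∧
    (∀ a : W, uW a ≤ u a) ∧
    (∀ E'W E' : R, E'W ≤ E' → ∀ a : W, 1 / u a - E' ≤ 1 / uW a - E'W) := by
  have shifted_eq : H + K • 1 = diagonal (fun α => K + V α) - t • G.adjMatrix R := by
    ext α β
    obtain rfl | hne := eq_or_ne α β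
    · simp [hH, add_comm]
    · by_cases hadj : G.Adj α β <;> simp [hH, hne, hadj]
  have shifted_well_eq : HW + K • 1 = (H + K • 1).submatrix Subtype.val Subtype.val := by
    rw [hHW, submatrix_add, submatrix_smul, Pi.add_apply, Pi.add_apply, Pi.smul_apply,
      Pi.smul_apply, submatrix_one _ Subtype.val_injective]
  have hA : IsNonsingularMMatrix (H + K • 1) := shifted_eq ▸
    isNonsingularMMatrix_diagonal_sub_smul_adjMatrix G ht.le fun α => by linarith [hK α]
  have hAW : IsNonsingularMMatrix (HW + K • 1) :=
    shifted_well_eq ▸ hA.submatrix Subtype.val_injective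
  have uW_pos : ∀ a, 0 < uW a := huW ▸ hAW.inv_mulVec_pos fun _ => one_pos
  have uW_le : ∀ a : W, uW a ≤ u a := by
    rw [hu, huW, shifted_well_eq]
    exact hA.submatrix_inv_mulVec_le Subtype.val_injective fun _ => zero_le_one
  refine ⟨fun a _ => (hK a).trans ?_, hAW.isUnit, uW_pos, uW_le, fun E'W E' hE a => ?_⟩
  · gcongr
    exact card_filter_adj_le_degree G W a
  · exact sub_le_sub (one_div_le_one_div_of_le (uW_pos a) (uW_le a)) hE

/-- **Core of Lemma IV.4**: restricting the eigenvalue problem to a well `W` (with zero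
Dirichlet conditions outside) can only deepen the effective potential. The constant `K`
still dominates on the induced subgraph, `H_W + K·I_W` is invertible, its landscape
`u^{(W)} = (H_W + K·I_W)⁻¹ 𝟙_W` is entrywise strictly positive, `u^{(W)} ≤ u` on `W`,
and hence for any `E'_W ≤ E'` one has `1/u − E' ≤ 1/u^{(W)} − E'_W` on `W`. -/
theorem mbll_well_landscape_comparison
    {Ω : Type*} [Fintype Ω] [DecidableEq Ω] [Nonempty Ω]
    (G : SimpleGraph Ω) [DecidableRel G.Adj] (hG : G.Connected)
    (t : ℝ) (ht : 0 < t) (V : Ω → ℝ) (K : ℝ)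
    (H : Matrix Ω Ω ℝ)
    (hH : ∀ α β, H α β = if α = β then V α else if G.Adj α β then -t else 0)
    (hK : ∀ α, 0 ≤ K + V α - t * (G.degree α + 1))
    (u : Ω → ℝ) (hu : u = (H + K • (1 : Matrix Ω Ω ℝ))⁻¹ *ᵥ (fun _ => 1))
    (hupos : ∀ α, 0 < u α)
    (W : Finset Ω) (hWne : W.Nonempty)
    (HW : Matrix W W ℝ) (hHW : HW = H.submatrix Subtype.val Subtype.val)
    (uW : W → ℝ) (huW : uW = (HW + K • (1 : Matrix W W ℝ))⁻¹ *ᵥ (fun _ => 1)) :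
    (∀ a ∈ W, 0 ≤ K + V a - t * ((W.filter fun b => G.Adj a b).card + 1)) ∧
    IsUnit (HW + K • (1 : Matrix W W ℝ)) ∧
    (∀ a : W, 0 < uW a) ∧
    (∀ a : W, uW a ≤ u a) ∧
    (∀ E'W E' : ℝ, E'W ≤ E' → ∀ a : W, 1 / u a - E' ≤ 1 / uW a - E'W) :=
  mbll_well_landscape_comparison_general G t ht V K H hH hK u hu W HW hHW uW huW
end
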